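/- Fix integers k ≥ r ≥ 3, u ∈ ω(1) ∩ o(n), a constant μ > 0, and set m = ⌈μ·n^{r−1}/u(n)^{r−2}⌉. Consider the Markov chain for the lower bound (E̲(t), C̲_{k−r+2}(t),…,C̲_k(t)) driven by the random ensemble. Then for any constants τ > 0 and λ ∈ ℝ, log E[exp(λ·E̲(⌊τ·u(n)⌋))] = φ_{k,r}(μ,λ,τ)·u(n) + O(max{1, u(n)²/n}) as n → ∞, i.e., E[exp(λ·E̲(⌊τ·u(n)⌋))] = exp( φ_{k,r}(μ,λ,τ)·u(n) + O(max{1, u(n)²/n}) ). -/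

import Mathlib

open Filter Finset Asymptotics

noncomputable section

/-- Neighborhood `∂(a)` of constraint `a` in the bipartite graph given by `ω`. -/
def nbhd {n m k : ℕ} (ω : Fin m → (Fin k ↪ Fin n)) (a : Fin m) : Finset (Fin n) :=
  Finset.univ.image (ω a)

/-- `V` is a `d`-stopping set: every constraint meets `V` in `0` or at least `d` variables. -/
def IsStoppingSet {n m k : ℕ} (d : ℕ) (ω : Fin m → (Fin k ↪ Fin n))
    (V : Finset (Fin n)) : Prop :=
  ∀ a : Fin m, (nbhd ω a ∩ V).card = 0 ∨ d ≤ (nbhd ω a ∩ V).card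

/-- Probability of an event under the uniform random bipartite-graph ensemble:
each of the `m` constraints independently picks a uniformly random `k`-tuple of
distinct indices from `{1,…,n}` (an embedding `Fin k ↪ Fin n`). -/
def prG (n m k : ℕ) (P : (Fin m → (Fin k ↪ Fin n)) → Prop) : ℝ :=
  letI := Classical.decPred P
  ((Finset.univ.filter P).card : ℝ) / (Fintype.card (Fin m → (Fin k ↪ Fin n)) : ℝ)

/-- `u ∈ ω(1) ∩ o(n)`. -/
def UGood (u : ℕ → ℕ) : Prop :=
  Tendsto (fun n => (u n : ℝ)) atTop atTop ∧
    Tendsto (fun n => (u n : ℝ) / (n : ℝ)) atTop (nhds 0)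

/-- `μ_c(k,r) = binom(k,r)⁻¹ (r-2)^(r-2) / (r (r-1)^(r-1))`. -/
def muc (k r : ℕ) : ℝ :=
  ((k.choose r : ℝ))⁻¹ * (((r : ℝ) - 2) ^ (r - 2) / ((r : ℝ) * ((r : ℝ) - 1) ^ (r - 1)))

/-- `φ_{k,r}(μ,λ,τ) = μ (e^{(k-r+1)λ} - 1) binom(k,r-1) (1+τ)^{r-1} - λτ`. -/
def phiE (k r : ℕ) (μ lam τ : ℝ) : ℝ :=
  μ * (Real.exp (((k : ℝ) - (r : ℝ) + 1) * lam) - 1) * (k.choose (r - 1) : ℝ)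
      * (1 + τ) ^ (r - 1)
    - lam * τ

/-- Membership in the local marginal polytope LOCAL: each `B a` is a distribution on
`[q]^k`, each `b i` is a distribution on `[q]`, and the marginalization conditions hold. -/
def MemLOCAL {n m q k : ℕ} (nb : Fin m → (Fin k ↪ Fin n))
    (b : Fin n → Fin q → ℝ) (B : Fin m → (Fin k → Fin q) → ℝ) : Prop :=
  (∀ i x, 0 ≤ b i x) ∧ (∀ i, ∑ x, b i x = 1) ∧
  (∀ a z, 0 ≤ B a z) ∧ (∀ a, ∑ z, B a z = 1) ∧
  (∀ (a : Fin m) (j : Fin k) (x : Fin q),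
    b (nb a j) x = ∑ z : Fin k → Fin q, if z j = x then B a z else 0)

/-- A point of LOCAL is zero-optimal if each `B a` is supported on `f_a⁻¹(y_a)`. -/
def ZeroOptimal {m q k l : ℕ} (f : Fin m → (Fin k → Fin q) → (Fin l → Fin q))
    (y : Fin m → Fin l → Fin q) (B : Fin m → (Fin k → Fin q) → ℝ) : Prop :=
  ∀ a z, B a z ≠ 0 → f a z = y a

/-- Integral part of a point of LOCAL. -/
def integralPart {n q : ℕ} (b : Fin n → Fin q → ℝ) : Finset (Fin n) :=
  letI := Classical.decPred fun i : Fin n => ∃ x : Fin q, b i x = 1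
  Finset.univ.filter fun i : Fin n => ∃ x : Fin q, b i x = 1

/-- `f : [q]^k → [q]^l` is `w`-wise independent. -/
def WiseIndep (q k l w : ℕ) (f : (Fin k → Fin q) → (Fin l → Fin q)) : Prop :=
  ∀ T : Finset (Fin k), T.card ≤ w → ∀ xT : Fin k → Fin q, ∀ y : Fin l → Fin q,
    (Finset.univ.filter fun x : Fin k → Fin q =>
        (∀ i ∈ T, x i = xT i) ∧ f x = y).card
      = q ^ (k - T.card - l)

/-- Minimum Hamming distance of a code. -/
def minHammingDist {A : Type*} [DecidableEq A] {k : ℕ} (M : Finset (Fin k → A)) : ℕ :=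
  sInf {d | ∃ x ∈ M, ∃ y ∈ M, x ≠ y ∧ hammingDist x y = d}

/-- `M` is an MDS code of length `k` and dimension `r-1`. -/
def IsMDSCode (A : Type*) [Fintype A] [DecidableEq A] (k r : ℕ)
    (M : Finset (Fin k → A)) : Prop :=
  M.card = Fintype.card A ^ (r - 1) ∧ minHammingDist M = k - r + 2

/-- `f` has MDS inverse image of dimension `r-1`. -/
def HasMDSInv (q k r : ℕ) (f : (Fin k → Fin q) → (Fin (k - r + 1) → Fin q)) : Prop :=
  ∀ y : Fin (k - r + 1) → Fin q,
    IsMDSCode (Fin q) k r (Finset.univ.filter fun x => f x = y)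

instance {n m k : ℕ} (d : ℕ) (ω : Fin m → (Fin k ↪ Fin n)) :
    DecidablePred fun V : Finset (Fin n) => IsStoppingSet d ω V := fun V => by
  unfold IsStoppingSet; infer_instance
/-- The binomial point mass `binom(n,i) p^i (1-p)^(n-i)`. -/
def binomPMF (n : ℕ) (p : ℝ) (i : ℕ) : ℝ := (n.choose i : ℝ) * p ^ i * (1 - p) ^ (n - i)

/-- `C_j(0)`: the number of constraints whose neighborhood meets the unknown
variables `{u+1,…,n}` in exactly `j` variables. -/
def Cinit (n m k u : ℕ) (ω : Fin m → (Fin k ↪ Fin n)) (j : ℕ) : ℕ :=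
  (Finset.univ.filter fun a : Fin m =>
    ((nbhd ω a).filter fun i : Fin n => u ≤ (i : ℕ)).card = j).card

/-- Initial state of the peeling Markov chains: `E(0) = ∑_{j=1}^{k-r+1} j C_j(0)` and
`C_j(0)` for every `j`. -/
def initState (n m k r u : ℕ) (ω : Fin m → (Fin k ↪ Fin n)) : ℤ × (ℕ → ℕ) :=
  (∑ j ∈ Finset.Icc 1 (k - r + 1), (j : ℤ) * (Cinit n m k u ω j : ℤ),
   fun j => Cinit n m k u ω j)

/-- Extend a vector `R : Fin (r-1) → ℕ` (indexed by `j = k-r+2,…,k`) to all of `ℕ` by `0`. -/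
def Rext (k r : ℕ) (R : Fin (r - 1) → ℕ) (j : ℕ) : ℕ :=
  if h : k - r + 2 ≤ j ∧ j - (k - r + 2) < r - 1 then R ⟨j - (k - r + 2), h.2⟩ else 0

/-- One-step transition operator (at time `t`) of the Markov chain for the upper bound:
`(T_t g)(s) = E[g(next state) | state at time t = s]`, where independently
`R̄_j ~ Binom(C̄_j, j/N(t))` for `j = k-r+2,…,k`, `C̄_k` is unchanged,
`C̄_j ← C̄_j + R̄_{j+1}` for `j = k-r+2,…,k-1`, and `Ē ← Ē - 1 + (k-r+1) R̄_{k-r+2}`. -/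
def upperStep (k r n u t : ℕ) (g : ℤ × (ℕ → ℕ) → ℝ) (s : ℤ × (ℕ → ℕ)) : ℝ :=
  ∑' R : Fin (r - 1) → ℕ,
    (∏ i : Fin (r - 1),
      binomPMF (s.2 (k - r + 2 + (i : ℕ)))
        (((k - r + 2 + (i : ℕ) : ℕ) : ℝ) / ((n : ℝ) - (u : ℝ) - (t : ℝ))) (R i)) *
    g (s.1 - 1 + ((k - r + 1 : ℕ) : ℤ) * (Rext k r R (k - r + 2) : ℤ),
       fun j => if k - r + 2 ≤ j ∧ j < k then s.2 j + Rext k r R (j + 1) else s.2 j)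

/-- `upperIter k r n u s t g = T_s (T_{s+1} (⋯ (T_{s+t-1} g)))`, so that
`E[g(X_t)] = E[(upperIter k r n u 0 t g) (X_0)]` for the upper-bound chain. -/
def upperIter (k r n u : ℕ) : ℕ → ℕ → (ℤ × (ℕ → ℕ) → ℝ) → ℤ × (ℕ → ℕ) → ℝ
  | _, 0, g => g
  | s, t + 1, g => upperStep k r n u s (upperIter k r n u (s + 1) t g)

/-- `E[g(X̄(t))]` for the upper-bound Markov chain driven by the random ensemble. -/
def upperE (k r n u m t : ℕ) (g : ℤ × (ℕ → ℕ) → ℝ) : ℝ :=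
  (∑ ω : Fin m → (Fin k ↪ Fin n), upperIter k r n u 0 t g (initState n m k r u ω))
    / (Fintype.card (Fin m → (Fin k ↪ Fin n)) : ℝ)

/-- One-step transition operator (at time `t`) of the Markov chain for the lower bound:
independently `R̲_j ~ Binom(C̲_j, j/N(t))` for `j = k-r+2,…,k` and
`S̲ ~ Binom(E̲+t, 1/(N(t)-k+r))`; then `C̲_k ← C̲_k - R̲_k`,
`C̲_j ← C̲_j - R̲_j + R̲_{j+1}` for `j = k-r+2,…,k-1`, and
`E̲ ← E̲ - 1 - S̲ + (k-r+1) R̲_{k-r+2}`. -/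
def lowerStep (k r n u t : ℕ) (g : ℤ × (ℕ → ℕ) → ℝ) (s : ℤ × (ℕ → ℕ)) : ℝ :=
  ∑' RS : (Fin (r - 1) → ℕ) × ℕ,
    ((∏ i : Fin (r - 1),
        binomPMF (s.2 (k - r + 2 + (i : ℕ)))
          (((k - r + 2 + (i : ℕ) : ℕ) : ℝ) / ((n : ℝ) - (u : ℝ) - (t : ℝ))) (RS.1 i)) *
      binomPMF (s.1 + (t : ℤ)).toNat
        (1 / ((n : ℝ) - (u : ℝ) - (t : ℝ) - (k : ℝ) + (r : ℝ))) RS.2) *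
    g (s.1 - 1 - (RS.2 : ℤ) + ((k - r + 1 : ℕ) : ℤ) * (Rext k r RS.1 (k - r + 2) : ℤ),
       fun j => if k - r + 2 ≤ j ∧ j ≤ k
         then s.2 j - Rext k r RS.1 j + Rext k r RS.1 (j + 1) else s.2 j)

/-- `lowerIter k r n u s t g = T_s (T_{s+1} (⋯ (T_{s+t-1} g)))` for the lower-bound chain. -/
def lowerIter (k r n u : ℕ) : ℕ → ℕ → (ℤ × (ℕ → ℕ) → ℝ) → ℤ × (ℕ → ℕ) → ℝ
  | _, 0, g => g
  | s, t + 1, g => lowerStep k r n u s (lowerIter k r n u (s + 1) t g)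

/-- `E[g(X̲(t))]` for the lower-bound Markov chain driven by the random ensemble. -/
def lowerE (k r n u m t : ℕ) (g : ℤ × (ℕ → ℕ) → ℝ) : ℝ :=
  (∑ ω : Fin m → (Fin k ↪ Fin n), lowerIter k r n u 0 t g (initState n m k r u ω))
    / (Fintype.card (Fin m → (Fin k ↪ Fin n)) : ℝ)

/-!
The exponential generating function of the chain stays a product of powers when it is pulled back
along a transition, because binomial generating functions are powers. Pulling `exp (lam * E)` back
to time `0` thus assigns a weight to each constraint separately, and the constraints are
independent: `𝔼 exp (lam * E(T)) = exp (-lam * T) * A ^ m`, with `A` the mean weight of one random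
constraint.

Under the pull-back, the number of unknown variables of a constraint evolves as if the variables
`u + 1, …, u + T` were revealed one by one. A constraint weighs about `exp (lam * (k - r + 1))` if
it ends up with at least `r - 1` known variables, and `1` otherwise, so that `A - 1` is
`exp (lam * (k - r + 1)) - 1` times the probability that at least `r - 1` of `k` random variables
are among the first `u + T`, up to a relative error `O(1 / u + u / n)`. Factorial moments and a
Bonferroni inequality evaluate this probability as `binom(k, r - 1) * ((u + T) / n) ^ (r - 1)`, and
`m * (u / n) ^ (r - 1) ≈ μ * u` gives the main term of `m * log A`.
-/

section BinomialSums

lemma sum_binomPMF_mul_pow (N : ℕ) (p a b : ℝ) :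
    ∑ i ∈ range (N + 1), binomPMF N p i * (a ^ (N - i) * b ^ i) = ((1 - p) * a + p * b) ^ N := by
  rw [add_comm ((1 - p) * a), add_pow]
  exact sum_congr rfl fun i _ => by simp only [binomPMF, mul_pow]; ring

lemma binomPMF_eq_zero_of_lt {N i : ℕ} (h : N < i) (p : ℝ) : binomPMF N p i = 0 := by
  simp [binomPMF, Nat.choose_eq_zero_of_lt h]

lemma tsum_prod_binomPMF_mul {ι : Type*} [Fintype ι] (N : ι → ℕ) (p a b : ι → ℝ)
    (M : ℕ) (q c d κ : ℝ) {G : (ι → ℕ) × ℕ → ℝ}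
    (hG : ∀ R S, (∀ i, R i ≤ N i) → S ≤ M →
      G (R, S) = κ * ((∏ i, a i ^ (N i - R i) * b i ^ R i) * (c ^ (M - S) * d ^ S))) :
    ∑' RS : (ι → ℕ) × ℕ, (∏ i, binomPMF (N i) (p i) (RS.1 i)) * binomPMF M q RS.2 * G RS =
      κ * ((∏ i, ((1 - p i) * a i + p i * b i) ^ N i) * ((1 - q) * c + q * d) ^ M) := by
  classical
  rw [tsum_eq_sum (s := Fintype.piFinset (fun i => range (N i + 1)) ×ˢ range (M + 1))]
  · simp_rw [← sum_binomPMF_mul_pow, prod_univ_sum, sum_mul_sum, ← sum_product', mul_sum]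
    refine sum_congr rfl fun ⟨R, S⟩ hRS => ?_
    simp only [mem_product, Fintype.mem_piFinset, mem_range, Nat.lt_succ_iff] at hRS
    rw [hG R S hRS.1 hRS.2, prod_mul_distrib (f := fun i => binomPMF (N i) (p i) (R i))]
    ring
  · rintro ⟨R, S⟩ hRS
    simp only [mem_product, Fintype.mem_piFinset, mem_range, not_and_or, not_forall, not_lt,
      Nat.succ_le_iff] at hRS
    rcases hRS with ⟨i, hi⟩ | hS
    · rw [prod_eq_zero (mem_univ i) (binomPMF_eq_zero_of_lt hi _), zero_mul, zero_mul]
    · rw [binomPMF_eq_zero_of_lt hS, mul_zero, zero_mul]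

end BinomialSums

section LowerChain

variable {k r : ℕ}

lemma Rext_add (R : Fin (r - 1) → ℕ) (i : Fin (r - 1)) : Rext k r R (k - r + 2 + i) = R i := by
  simp [Rext]

lemma Rext_top (R : Fin (r - 1) → ℕ) : Rext k r R (k - r + 2 + (r - 1)) = 0 := by
  simp [Rext]

lemma pow_mul_prod_range_pow_succ (w : ℕ → ℝ) {R : ℕ → ℕ} {q : ℕ} (hR : R q = 0) :
    w 0 ^ R 0 * ∏ i ∈ range q, w (i + 1) ^ R (i + 1) = ∏ i ∈ range q, w i ^ R i := by
  rw [mul_comm, ← prod_range_succ' (fun i => w i ^ R i), prod_range_succ, hR, pow_zero, mul_one]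

/-- The observables of the lower chain that are preserved, up to a change of weights, by its
transition operator: at time `t` every edge counted by `E̲ + t` has weight `x` and every
constraint counted by `C̲_j`, `j = k-r+2,…,k`, has weight `w j`. -/
def productWeight (k r t : ℕ) (x : ℝ) (w : ℕ → ℝ) (st : ℤ × (ℕ → ℕ)) : ℝ :=
  (∏ i : Fin (r - 1), w (k - r + 2 + i) ^ st.2 (k - r + 2 + i)) * x ^ (st.1 + t).toNat

/-- The state of the lower chain after `st`, given the values `R` of the variables `R̲_j` and
`S` of `S̲`. -/
def lowerNext (k r : ℕ) (st : ℤ × (ℕ → ℕ)) (R : Fin (r - 1) → ℕ) (S : ℕ) : ℤ × (ℕ → ℕ) :=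
  (st.1 - 1 - (S : ℤ) + ((k - r + 1 : ℕ) : ℤ) * (Rext k r R (k - r + 2) : ℤ),
    fun j => if k - r + 2 ≤ j ∧ j ≤ k then st.2 j - Rext k r R j + Rext k r R (j + 1) else st.2 j)

lemma lowerNext_fst_add (st : ℤ × (ℕ → ℕ)) (R : Fin (r - 1) → ℕ) {S t : ℕ}
    (hst : 0 ≤ st.1 + t) (hS : S ≤ (st.1 + t).toNat) :
    (lowerNext k r st R S).1 + (t + 1 : ℕ) =
      ((st.1 + t).toNat - S + (k - r + 1) * Rext k r R (k - r + 2) : ℕ) := by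
  rw [lowerNext, Nat.cast_add ((st.1 + t).toNat - S), Nat.cast_sub hS, Int.toNat_of_nonneg hst,
    Nat.cast_mul, Nat.cast_add t]
  ring

lemma productWeight_lowerNext (hrk : r ≤ k) (st : ℤ × (ℕ → ℕ)) (R : Fin (r - 1) → ℕ) {S t : ℕ}
    (hst : 0 ≤ st.1 + t) (hS : S ≤ (st.1 + t).toNat) {x : ℝ} {w : ℕ → ℝ}
    (hw : w (k - r + 1) = x ^ (k - r + 1)) :
    productWeight k r (t + 1) x w (lowerNext k r st R S) =
      (∏ i : Fin (r - 1), w (k - r + 2 + i) ^ (st.2 (k - r + 2 + i) - R i) *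
        w (k - r + 2 + i - 1) ^ R i) * x ^ ((st.1 + t).toNat - S) := by
  have moved : x ^ ((k - r + 1) * Rext k r R (k - r + 2)) *
      ∏ i : Fin (r - 1), w (k - r + 2 + i) ^ Rext k r R (k - r + 2 + i + 1) =
        ∏ i : Fin (r - 1), w (k - r + 2 + i - 1) ^ R i := by
    have h := pow_mul_prod_range_pow_succ (fun i => w (k - r + 1 + i))
      (R := fun i => Rext k r R (k - r + 2 + i)) (Rext_top R)
    simp only [prod_range, add_zero, hw, ← pow_mul, Rext_add] at h
    convert h using 5 with i _ i _ <;> omega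
  have kept : ∀ i : Fin (r - 1), (lowerNext k r st R S).2 (k - r + 2 + i) =
      st.2 (k - r + 2 + i) - R i + Rext k r R (k - r + 2 + i + 1) := fun i => by
    simp only [lowerNext]
    rw [if_pos (by omega), Rext_add]
  rw [productWeight, lowerNext_fst_add st R hst hS, Int.toNat_natCast, pow_add,
    prod_congr rfl fun i _ => by rw [kept i, pow_add], prod_mul_distrib, prod_mul_distrib, ← moved]
  ring

/-- The effect of revealing one of `N` unknown variables, chosen uniformly at random, on a
function `f` of the number `j` of unknown variables of a constraint. -/
def revealStep (N : ℝ) (f : ℕ → ℝ) (j : ℕ) : ℝ :=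
  (1 - j / N) * f j + j / N * f (j - 1)

lemma lowerStep_productWeight (hrk : r ≤ k) {n u t : ℕ} {κ x : ℝ} {w : ℕ → ℝ}
    (hw : w (k - r + 1) = x ^ (k - r + 1)) {g : ℤ × (ℕ → ℕ) → ℝ}
    (hg : ∀ st : ℤ × (ℕ → ℕ), 0 ≤ st.1 + (t + 1 : ℕ) → g st = κ * productWeight k r (t + 1) x w st)
    {st : ℤ × (ℕ → ℕ)} (hst : 0 ≤ st.1 + t) :
    lowerStep k r n u t g st =
      κ * productWeight k r t
        ((1 - 1 / ((n : ℝ) - u - t - k + r)) * x + 1 / ((n : ℝ) - u - t - k + r) * 1)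
        (revealStep ((n : ℝ) - u - t) w) st := by
  refine tsum_prod_binomPMF_mul (fun i : Fin (r - 1) => st.2 (k - r + 2 + i)) _
    (fun i => w (k - r + 2 + i)) (fun i => w (k - r + 2 + i - 1)) _ _ x 1 κ fun R S _ hS => ?_
  have hnext : 0 ≤ (lowerNext k r st R S).1 + (t + 1 : ℕ) := by
    rw [lowerNext_fst_add st R hst hS]
    positivity
  rw [one_pow, mul_one, ← productWeight_lowerNext hrk st R hst hS hw]
  exact hg _ hnext

/-- The weight of an edge after `t` backward steps from the weight `exp lam`, when `v` variables
are known; it solves `x_{v,t+1} = (1 - 1/M) x_{v+1,t} + 1/M` with `M = n - v - k + r`. -/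
def edgeWeight (k r n : ℕ) (lam : ℝ) (v t : ℕ) : ℝ :=
  1 + (Real.exp lam - 1) * (1 - t / ((n : ℝ) - v - k + r))

/-- The weight of a constraint with `j` unknown variables after `t` backward steps, when `v`
variables are known: a constraint with at most `k-r+1` unknowns is a bundle of `j` edges, and at
the terminal time all other constraints have weight `1`. -/
def constraintWeight (k r n : ℕ) (lam : ℝ) : ℕ → ℕ → ℕ → ℝ
  | v, 0, j => if j ≤ k - r + 1 then edgeWeight k r n lam v 0 ^ j else 1
  | v, t + 1, j => if j ≤ k - r + 1 then edgeWeight k r n lam v (t + 1) ^ j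
      else revealStep ((n : ℝ) - v) (constraintWeight k r n lam (v + 1) t) j

lemma edgeWeight_zero (k r n : ℕ) (lam : ℝ) (v : ℕ) : edgeWeight k r n lam v 0 = Real.exp lam := by
  simp [edgeWeight]

lemma edgeWeight_succ {n v t : ℕ} (lam : ℝ) (h : v + t + 1 + k ≤ n) (hr : 0 < r) :
    edgeWeight k r n lam v (t + 1) =
      (1 - 1 / ((n : ℝ) - v - k + r)) * edgeWeight k r n lam (v + 1) t +
        1 / ((n : ℝ) - v - k + r) * 1 := by
  have h' : (v : ℝ) + t + 1 + k ≤ n := by exact_mod_cast h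
  have hr' : (0 : ℝ) < r := by exact_mod_cast hr
  have h₁ : (n : ℝ) - (v + 1) - k + r ≠ 0 := ne_of_gt (by linarith [t.cast_nonneg (α := ℝ)])
  have h₀ : (n : ℝ) - v - k + r ≠ 0 := ne_of_gt (by linarith [t.cast_nonneg (α := ℝ)])
  simp only [edgeWeight, Nat.cast_succ]
  field_simp
  ring

lemma constraintWeight_of_le {n j : ℕ} (lam : ℝ) (v t : ℕ) (hj : j ≤ k - r + 1) :
    constraintWeight k r n lam v t j = edgeWeight k r n lam v t ^ j := by
  cases t <;> exact if_pos hj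

lemma lowerIter_exp (hr : 0 < r) (hrk : r ≤ k) {n u : ℕ} (lam : ℝ) (t : ℕ) :
    ∀ (s : ℕ) (st : ℤ × (ℕ → ℕ)), 0 ≤ st.1 + s → u + s + t + k ≤ n →
      lowerIter k r n u s t (fun st => Real.exp (lam * (st.1 : ℝ))) st =
        Real.exp (-lam * ((s : ℝ) + t)) * productWeight k r s (edgeWeight k r n lam (u + s) t)
          (constraintWeight k r n lam (u + s) t) st := by
  induction t with
  | zero =>
    intro s st hst _
    have hcast : (((st.1 + s).toNat : ℕ) : ℝ) = st.1 + s := by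
      exact_mod_cast congrArg (Int.cast (R := ℝ)) (Int.toNat_of_nonneg hst)
    have hone : ∀ i : Fin (r - 1), constraintWeight k r n lam (u + s) 0 (k - r + 2 + i) = 1 :=
      fun i => if_neg (by omega)
    simp only [lowerIter, productWeight, hone, one_pow, prod_const_one, one_mul, edgeWeight_zero]
    rw [← Real.exp_nat_mul, ← Real.exp_add, hcast]
    congr 1
    push_cast
    ring
  | succ t ih =>
    intro s st hst hn
    rw [lowerIter, lowerStep_productWeight hrk (constraintWeight_of_le lam _ t le_rfl)
      (fun st' hst' => ih (s + 1) st' hst' (by omega)) hst]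
    have hx := edgeWeight_succ (k := k) (r := r) (v := u + s) (t := t) lam (by omega) hr
    have hw : ∀ i : Fin (r - 1), constraintWeight k r n lam (u + s) (t + 1) (k - r + 2 + i) =
        revealStep ((n : ℝ) - u - s) (constraintWeight k r n lam (u + s + 1) t) (k - r + 2 + i) :=
      fun i => by rw [constraintWeight, if_neg (by omega), Nat.cast_add, sub_sub]
    rw [Nat.cast_add, ← sub_sub] at hx
    simp only [productWeight, hw, hx, ← add_assoc u s 1]
    congr 2
    push_cast
    ring

end LowerChain

section Embeddings

variable {ι α : Type*} [Fintype ι] [DecidableEq α]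

lemma sum_card_mem_erase (e : ι ↪ α) (U : Finset α) (f : ℕ → ℝ) :
    ∑ i ∈ U, f #{x | e x ∈ U.erase i} =
      (#U - #{x | e x ∈ U}) * f #{x | e x ∈ U} + #{x | e x ∈ U} * f (#{x | e x ∈ U} - 1) := by
  classical
  set H : Finset ι := {x | e x ∈ U}
  have hmem : ∀ x, x ∈ H ↔ e x ∈ U := fun x => by simp [H]
  have hsub : H.map e ⊆ U := fun i hi => by
    obtain ⟨x, hx, rfl⟩ := Finset.mem_map.1 hi
    exact (hmem x).1 hx
  have hit : ∀ i ∈ H.map e, f #{x | e x ∈ U.erase i} = f (#H - 1) := fun i hi => by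
    obtain ⟨x, hx, rfl⟩ := Finset.mem_map.1 hi
    rw [← card_erase_of_mem hx]
    exact congrArg (fun s => f #s) (Finset.ext fun y => by simp [hmem])
  have miss : ∀ i ∈ U \ H.map e, f #{x | e x ∈ U.erase i} = f #H := fun i hi => by
    refine congrArg (fun s => f #s) (Finset.ext fun y => ?_)
    simp only [mem_filter, mem_univ, true_and, mem_erase, hmem, and_iff_right_iff_imp]
    rintro hy rfl
    exact (Finset.mem_sdiff.1 hi).2 (mem_map_of_mem e ((hmem y).2 hy))
  rw [← sum_sdiff hsub, sum_congr rfl miss, sum_congr rfl hit, sum_const, sum_const, nsmul_eq_mul,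
    nsmul_eq_mul, card_sdiff_of_subset hsub, Nat.cast_sub (card_le_card hsub), card_map]

variable [Fintype α]

lemma sum_embedding_card_mem_congr {M : Type*} [AddCommMonoid M] {U V : Finset α} (h : #U = #V)
    (f : ℕ → M) : ∑ e : ι ↪ α, f #{x | e x ∈ U} = ∑ e : ι ↪ α, f #{x | e x ∈ V} := by
  let σ : Equiv.Perm α := (U.equivOfCardEq h).extendSubtype
  have hσ : ∀ x, σ x ∈ V ↔ x ∈ U := fun x =>
    ⟨fun hx => by_contra fun hxU => (U.equivOfCardEq h).extendSubtype_not_mem x hxU hx,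
      (U.equivOfCardEq h).extendSubtype_mem x⟩
  refine Fintype.sum_equiv (Equiv.embeddingCongr (Equiv.refl ι) σ) _ _ fun e => ?_
  simp [Equiv.embeddingCongr, hσ]

lemma card_mul_sum_embedding_card_mem_erase {U : Finset α} {i : α} (hi : i ∈ U) (f : ℕ → ℝ) :
    #U * ∑ e : ι ↪ α, f #{x | e x ∈ U.erase i} =
      ∑ e : ι ↪ α, ((#U - #{x | e x ∈ U}) * f #{x | e x ∈ U} +
        #{x | e x ∈ U} * f (#{x | e x ∈ U} - 1)) := by
  have hcard : ∀ j ∈ U, ∑ e : ι ↪ α, f #{x | e x ∈ U.erase i} =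
      ∑ e : ι ↪ α, f #{x | e x ∈ U.erase j} := fun j hj =>
    sum_embedding_card_mem_congr (by rw [card_erase_of_mem hi, card_erase_of_mem hj]) f
  rw [← nsmul_eq_mul, ← sum_const, sum_congr rfl hcard, sum_comm]
  exact sum_congr rfl fun e _ => sum_card_mem_erase e U f

end Embeddings

section RandomNeighborhood

open scoped BigOperators

variable {n k : ℕ}

/-- The number of unknown variables, those of index at least `v`, in the neighborhood of a
constraint. -/
def unknownCount (v : ℕ) (e : Fin k ↪ Fin n) : ℕ := #{x | v ≤ (e x : ℕ)}

/-- The expectation of a function of the number of unknown variables of a uniformly random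
constraint, when `v` variables are known. -/
def nbhdMean (n k v : ℕ) (f : ℕ → ℝ) : ℝ := 𝔼 e : Fin k ↪ Fin n, f (unknownCount v e)

lemma unknownCount_le (v : ℕ) (e : Fin k ↪ Fin n) : unknownCount v e ≤ k :=
  (card_filter_le _ _).trans (by simp)

lemma nbhdMean_congr {f g : ℕ → ℝ} (v : ℕ) (h : ∀ j ≤ k, f j = g j) :
    nbhdMean n k v f = nbhdMean n k v g :=
  expect_congr rfl fun e _ => h _ (unknownCount_le v e)

lemma nbhdMean_mono {f g : ℕ → ℝ} (v : ℕ) (h : ∀ j ≤ k, f j ≤ g j) :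
    nbhdMean n k v f ≤ nbhdMean n k v g :=
  expect_le_expect fun e _ => h _ (unknownCount_le v e)

lemma abs_nbhdMean_le {f g : ℕ → ℝ} (v : ℕ) (h : ∀ j ≤ k, |f j| ≤ g j) :
    |nbhdMean n k v f| ≤ nbhdMean n k v g :=
  (abs_expect_le _ _).trans (nbhdMean_mono v h)

lemma nbhdMean_add (v : ℕ) (f g : ℕ → ℝ) :
    nbhdMean n k v (fun j => f j + g j) = nbhdMean n k v f + nbhdMean n k v g :=
  expect_add_distrib ..

lemma nbhdMean_const_mul (v : ℕ) (c : ℝ) (f : ℕ → ℝ) :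
    nbhdMean n k v (fun j => c * f j) = c * nbhdMean n k v f :=
  (mul_expect ..).symm

lemma nbhdMean_const (hkn : k ≤ n) (v : ℕ) (c : ℝ) : nbhdMean n k v (fun _ => c) = c := by
  have : Nonempty (Fin k ↪ Fin n) := ⟨Fin.castLEEmb hkn⟩
  exact Fintype.expect_const c

lemma nbhdMean_revealStep {v : ℕ} (hv : v < n) (f : ℕ → ℝ) :
    nbhdMean n k v (revealStep ((n : ℝ) - v) f) = nbhdMean n k (v + 1) f := by
  let i₀ : Fin n := ⟨v, hv⟩
  have hcard : (#(Ici i₀) : ℝ) = n - v := by rw [Fin.card_Ici, Nat.cast_sub hv.le]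
  have hpos : (n : ℝ) - v ≠ 0 := sub_ne_zero.2 (by exact_mod_cast hv.ne')
  have hU : ∀ e : Fin k ↪ Fin n, #{x | e x ∈ Ici i₀} = unknownCount v e :=
    fun e => by simp [i₀, unknownCount, Fin.le_def]
  have hV : ∀ e : Fin k ↪ Fin n, #{x | e x ∈ (Ici i₀).erase i₀} = unknownCount (v + 1) e :=
    fun e => congrArg card (Finset.ext fun x => by
      simp only [i₀, mem_filter, mem_univ, true_and, mem_erase, mem_Ici, Fin.le_def, Ne,
        Fin.ext_iff]
      omega)
  have h := card_mul_sum_embedding_card_mem_erase (ι := Fin k) (mem_Ici.2 (le_refl i₀)) f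
  simp only [hU, hV, hcard] at h
  rw [nbhdMean, nbhdMean, Fintype.expect_eq_sum_div_card, Fintype.expect_eq_sum_div_card,
    ← mul_div_cancel_left₀ (∑ e : Fin k ↪ Fin n, f (unknownCount (v + 1) e)) hpos, h]
  refine congrArg (· / _) ?_
  rw [Finset.sum_div]
  refine sum_congr rfl fun e _ => ?_
  rw [revealStep]
  field_simp

lemma card_nbhd_filter {m : ℕ} (v : ℕ) (ω : Fin m → (Fin k ↪ Fin n)) (a : Fin m) :
    #((nbhd ω a).filter fun i : Fin n => v ≤ (i : ℕ)) = unknownCount v (ω a) := by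
  rw [nbhd, filter_image, card_image_of_injective _ (ω a).injective, unknownCount]

lemma prod_unknownCount {m : ℕ} (v : ℕ) (ω : Fin m → (Fin k ↪ Fin n)) (w : ℕ → ℝ) :
    ∏ a, w (unknownCount v (ω a)) = ∏ j ∈ range (k + 1), w j ^ Cinit n m k v ω j := by
  have hmaps : ∀ a ∈ (univ : Finset (Fin m)), unknownCount v (ω a) ∈ range (k + 1) :=
    fun a _ => mem_range_succ_iff.2 (unknownCount_le v (ω a))
  simp only [Cinit, card_nbhd_filter]
  rw [← prod_fiberwise_of_maps_to hmaps]
  exact prod_congr rfl fun j _ => prod_eq_pow_card fun a ha => by rw [(mem_filter.1 ha).2]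

lemma prod_range_eq_mul_prod_Icc_mul_prod {r : ℕ} (hr : 0 < r) (hrk : r ≤ k) (f : ℕ → ℝ) :
    ∏ j ∈ range (k + 1), f j =
      f 0 * (∏ j ∈ Icc 1 (k - r + 1), f j) * ∏ i : Fin (r - 1), f (k - r + 2 + i) := by
  rw [show k + 1 = k - r + 1 + 1 + (r - 1) by omega, prod_range_add, prod_range (n := r - 1),
    range_eq_Ico, prod_eq_prod_Ico_succ_bot (Nat.succ_pos _)]
  rfl

lemma productWeight_initState {r m v : ℕ} (hr : 0 < r) (hrk : r ≤ k) (ω : Fin m → (Fin k ↪ Fin n))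
    {x : ℝ} {w : ℕ → ℝ} (hw : ∀ j ≤ k - r + 1, w j = x ^ j) :
    productWeight k r 0 x w (initState n m k r v ω) = ∏ a, w (unknownCount v (ω a)) := by
  have hE : (initState n m k r v ω).1 + (0 : ℕ) =
      ((∑ j ∈ Icc 1 (k - r + 1), j * Cinit n m k v ω j : ℕ) : ℤ) := by simp [initState]
  have hedges : x ^ ∑ j ∈ Icc 1 (k - r + 1), j * Cinit n m k v ω j =
      ∏ j ∈ Icc 1 (k - r + 1), w j ^ Cinit n m k v ω j := by
    rw [← prod_pow_eq_pow_sum]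
    exact prod_congr rfl fun j hj => by rw [hw j (mem_Icc.1 hj).2, pow_mul]
  rw [prod_unknownCount, prod_range_eq_mul_prod_Icc_mul_prod hr hrk, hw 0 (Nat.zero_le _), pow_zero,
    one_pow, one_mul, productWeight, hE, Int.toNat_natCast, hedges, mul_comm]
  rfl

lemma lowerE_exp {r : ℕ} (hr : 0 < r) (hrk : r ≤ k) {u T : ℕ} (hn : u + T + k ≤ n) (m : ℕ)
    (lam : ℝ) :
    lowerE k r n u m T (fun st => Real.exp (lam * (st.1 : ℝ))) =
      Real.exp (-lam * T) * nbhdMean n k u (constraintWeight k r n lam u T) ^ m := by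
  have hω : ∀ ω : Fin m → (Fin k ↪ Fin n),
      lowerIter k r n u 0 T (fun st => Real.exp (lam * (st.1 : ℝ))) (initState n m k r u ω) =
        Real.exp (-lam * T) * ∏ a, constraintWeight k r n lam u T (unknownCount u (ω a)) :=
    fun ω => by
      rw [lowerIter_exp hr hrk lam T 0 _ (by simp only [initState]; positivity) (by omega),
        Nat.cast_zero, zero_add, add_zero,
        productWeight_initState hr hrk ω fun j => constraintWeight_of_le lam u T]
  rw [lowerE, sum_congr rfl fun ω _ => hω ω, ← mul_sum, mul_div_assoc,
    ← Fintype.expect_eq_sum_div_card, nbhdMean, expect_pow,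
    Fintype.piFinset_univ]

end RandomNeighborhood

section FactorialMoments

lemma cast_descFactorial_succ (v a : ℕ) :
    ((v.descFactorial (a + 1) : ℕ) : ℝ) = ((v : ℝ) - a) * v.descFactorial a := by
  rcases le_or_gt a v with h | h
  · rw [Nat.descFactorial_succ, Nat.cast_mul, Nat.cast_sub h]
  · rw [Nat.descFactorial_of_lt h, Nat.descFactorial_of_lt (by omega)]
    simp

lemma cast_choose_succ_mul (x a : ℕ) :
    ((a : ℝ) + 1) * x.choose (a + 1) = ((x : ℝ) - a) * x.choose a := by
  rcases le_or_gt a x with h | h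
  · have := Nat.choose_succ_right_eq x a
    rw [← Nat.cast_sub h, mul_comm, mul_comm ((x - a : ℕ) : ℝ)]
    exact_mod_cast this
  · rw [Nat.choose_eq_zero_of_lt h, Nat.choose_eq_zero_of_lt (by omega)]
    simp

lemma revealStep_choose {k j : ℕ} (hj : j ≤ k) (N : ℝ) (a : ℕ) :
    revealStep N (fun i => ((k - i).choose (a + 1) : ℝ)) j =
      (1 - (a + 1) / N) * (k - j).choose (a + 1) + (k - a) / N * (k - j).choose a := by
  rcases Nat.eq_zero_or_pos j with rfl | hpos
  · have := cast_choose_succ_mul k a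
    simp only [revealStep, Nat.sub_zero, Nat.cast_zero, zero_div, sub_zero, one_mul, zero_mul,
      add_zero]
    linear_combination this / N
  · have h := cast_choose_succ_mul (k - j) a
    rw [Nat.cast_sub hj] at h
    have hsucc : k - (j - 1) = k - j + 1 := by omega
    simp only [revealStep, hsucc, Nat.choose_succ_succ, Nat.cast_add] at h ⊢
    linear_combination h / N

lemma nbhdMean_choose {n k v : ℕ} (hkn : k ≤ n) (hv : v ≤ n) (a : ℕ) :
    nbhdMean n k v (fun j => ((k - j).choose a : ℝ)) * n.descFactorial a =
      k.choose a * v.descFactorial a := by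
  induction v generalizing a with
  | zero =>
    have hall : nbhdMean n k 0 (fun j => ((k - j).choose a : ℝ)) =
        nbhdMean n k 0 (fun _ => (Nat.choose 0 a : ℝ)) :=
      expect_congr rfl fun e _ => by simp [unknownCount]
    rw [hall, nbhdMean_const hkn]
    cases a <;> simp
  | succ v ih =>
    rcases a with _ | a
    · simp [nbhdMean_const hkn]
    have hN : (n : ℝ) - v ≠ 0 := sub_ne_zero.2 (by exact_mod_cast (show v < n by omega).ne')
    have hsplit : nbhdMean n k (v + 1) (fun j => ((k - j).choose (a + 1) : ℝ)) =
        (1 - (a + 1) / (n - v)) * nbhdMean n k v (fun j => ((k - j).choose (a + 1) : ℝ)) +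
          (k - a) / (n - v) * nbhdMean n k v (fun j => ((k - j).choose a : ℝ)) := by
      rw [← nbhdMean_revealStep (by omega), ← nbhdMean_const_mul, ← nbhdMean_const_mul,
        ← nbhdMean_add]
      exact nbhdMean_congr v fun j hj => revealStep_choose hj _ a
    have ih₁ := ih (by omega) (a + 1)
    have ih₀ := ih (by omega) a
    have hv₁ : (((v + 1).descFactorial (a + 1) : ℕ) : ℝ) = (v + 1) * v.descFactorial a := by
      rw [Nat.succ_descFactorial_succ]; push_cast; ring
    have hc := cast_choose_succ_mul k a
    rw [hsplit, hv₁, add_mul, mul_assoc, ih₁, cast_descFactorial_succ n, cast_descFactorial_succ v]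
    field_simp
    linear_combination ((k : ℝ) - a) * (n - a) * ih₀ - (n - a) * v.descFactorial a * hc

lemma descFactorial_mul_pow_le {v n : ℕ} (hv : v ≤ n) (a : ℕ) :
    v.descFactorial a * n ^ a ≤ n.descFactorial a * v ^ a := by
  induction a with
  | zero => simp
  | succ a ih =>
    have hstep : (v - a) * n ≤ (n - a) * v := by
      rw [Nat.sub_mul, Nat.sub_mul, mul_comm n v]
      exact Nat.sub_le_sub_left (Nat.mul_le_mul_left a hv) _
    calc v.descFactorial (a + 1) * n ^ (a + 1)
        = (v - a) * n * (v.descFactorial a * n ^ a) := by rw [Nat.descFactorial_succ]; ring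
      _ ≤ (n - a) * v * (n.descFactorial a * v ^ a) := Nat.mul_le_mul hstep ih
      _ = n.descFactorial (a + 1) * v ^ (a + 1) := by rw [Nat.descFactorial_succ]; ring

lemma one_sub_mul_pow_le_descFactorial {v : ℕ} (hv : 0 < v) {a : ℕ} (ha : a ≤ v) :
    (1 - (a : ℝ) ^ 2 / v) * v ^ a ≤ v.descFactorial a := by
  have hv' : (0 : ℝ) < v := by exact_mod_cast hv
  have hav : (a : ℝ) / v ≤ 1 := (div_le_one hv').2 (by exact_mod_cast ha)
  calc (1 - (a : ℝ) ^ 2 / v) * v ^ a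
      = (1 + a * (-(a / v))) * (v : ℝ) ^ a := by ring
    _ ≤ (1 + -(a / v)) ^ a * (v : ℝ) ^ a := by
        gcongr
        exact one_add_mul_le_pow (by linarith) a
    _ = ((v : ℝ) - a) ^ a := by rw [← mul_pow]; congr 1; field_simp; ring
    _ ≤ v.descFactorial a := by
        have h : ((v + 1 - a) ^ a : ℕ) ≤ v.descFactorial a := Nat.pow_sub_le_descFactorial v a
        calc ((v : ℝ) - a) ^ a ≤ ((v + 1 - a : ℕ) : ℝ) ^ a := by
              rw [← Nat.cast_sub ha]
              gcongr
              omega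
          _ ≤ _ := by exact_mod_cast h

variable {n k v a : ℕ}

lemma nbhdMean_choose_eq_div (hkn : k ≤ n) (hv : v ≤ n) (ha : a ≤ k) :
    nbhdMean n k v (fun j => ((k - j).choose a : ℝ)) =
      k.choose a * (v.descFactorial a / n.descFactorial a) := by
  have hn : (n.descFactorial a : ℝ) ≠ 0 :=
    Nat.cast_ne_zero.2 (Nat.descFactorial_pos.2 (ha.trans hkn)).ne'
  rw [← mul_div_assoc, eq_div_iff hn, nbhdMean_choose hkn hv]

lemma nbhdMean_choose_le (hn : 0 < n) (hkn : k ≤ n) (hv : v ≤ n) (ha : a ≤ k) :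
    nbhdMean n k v (fun j => ((k - j).choose a : ℝ)) ≤ k.choose a * ((v : ℝ) / n) ^ a := by
  have hn' : (0 : ℝ) < n.descFactorial a :=
    Nat.cast_pos.2 (Nat.descFactorial_pos.2 (ha.trans hkn))
  rw [nbhdMean_choose_eq_div hkn hv ha]
  gcongr
  rw [div_pow, div_le_div_iff₀ hn' (by positivity), mul_comm (_ ^ a)]
  exact_mod_cast descFactorial_mul_pow_le hv a

lemma le_nbhdMean_choose (hkn : k ≤ n) (hv₀ : 0 < v) (hv : v ≤ n) (hak : a ≤ k) (hav : a ≤ v) :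
    k.choose a * ((1 - (a : ℝ) ^ 2 / v) * ((v : ℝ) / n) ^ a) ≤
      nbhdMean n k v (fun j => ((k - j).choose a : ℝ)) := by
  have hn' : (0 : ℝ) < n.descFactorial a :=
    Nat.cast_pos.2 (Nat.descFactorial_pos.2 (hak.trans hkn))
  rw [nbhdMean_choose_eq_div hkn hv hak]
  gcongr
  calc (1 - (a : ℝ) ^ 2 / v) * ((v : ℝ) / n) ^ a
      = (1 - (a : ℝ) ^ 2 / v) * (v : ℝ) ^ a / (n : ℝ) ^ a := by rw [div_pow, mul_div_assoc]
    _ ≤ v.descFactorial a / (n : ℝ) ^ a := by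
        gcongr
        exact one_sub_mul_pow_le_descFactorial hv₀ hav
    _ ≤ v.descFactorial a / n.descFactorial a :=
        div_le_div_of_nonneg_left (by positivity) hn'
          (by exact_mod_cast Nat.descFactorial_le_pow n a)

/-- The probability that a uniformly random constraint contains at least `p` of the `v` known
variables. -/
def knownTail (n k v p : ℕ) : ℝ := nbhdMean n k v fun j => if p ≤ k - j then 1 else 0

lemma knownTail_nonneg (n k v p : ℕ) : 0 ≤ knownTail n k v p :=
  expect_nonneg fun e _ => by positivity

lemma knownTail_le (hn : 0 < n) (hkn : k ≤ n) (hv : v ≤ n) (ha : a ≤ k) :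
    knownTail n k v a ≤ k.choose a * ((v : ℝ) / n) ^ a := by
  refine le_trans (nbhdMean_mono v fun j _ => ?_) (nbhdMean_choose_le hn hkn hv ha)
  split_ifs with h
  · exact_mod_cast Nat.choose_pos h
  · positivity

lemma choose_le_ite_add (x a : ℕ) :
    (x.choose a : ℝ) ≤ (if a ≤ x then 1 else 0) + (a + 1) * x.choose (a + 1) := by
  rcases lt_trichotomy a x with h | rfl | h
  · have h1 : (1 : ℝ) ≤ (x : ℝ) - a := by
      rw [← Nat.cast_sub h.le]
      exact_mod_cast Nat.sub_pos_of_lt h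
    rw [cast_choose_succ_mul, if_pos h.le]
    nlinarith [(x.choose a).cast_nonneg (α := ℝ)]
  · simp
  · rw [Nat.choose_eq_zero_of_lt h, if_neg (by omega), Nat.cast_zero]
    positivity

lemma le_knownTail (hkn : k ≤ n) (hv₀ : 0 < v) (hv : v ≤ n) (hak : a + 1 ≤ k) (hav : a ≤ v) :
    k.choose a * ((1 - (a : ℝ) ^ 2 / v) * ((v : ℝ) / n) ^ a) -
        (a + 1) * (k.choose (a + 1) * ((v : ℝ) / n) ^ (a + 1)) ≤ knownTail n k v a := by
  have hbonferroni : nbhdMean n k v (fun j => ((k - j).choose a : ℝ)) ≤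
      knownTail n k v a + (a + 1) * nbhdMean n k v (fun j => ((k - j).choose (a + 1) : ℝ)) := by
    rw [knownTail, ← nbhdMean_const_mul, ← nbhdMean_add]
    exact nbhdMean_mono v fun j _ => choose_le_ite_add (k - j) a
  have hlower := le_nbhdMean_choose hkn hv₀ hv (by omega : a ≤ k) hav
  have hupper := mul_le_mul_of_nonneg_left
    (nbhdMean_choose_le (hv₀.trans_le hv) hkn hv hak) (by positivity : (0 : ℝ) ≤ a + 1)
  linarith

lemma abs_knownTail_sub_le (hkn : k ≤ n) (hv₀ : 0 < v) (hv : v ≤ n) (hak : a + 1 ≤ k)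
    (hav : a ≤ v) :
    |knownTail n k v a - k.choose a * ((v : ℝ) / n) ^ a| ≤
      ((v : ℝ) / n) ^ a * (k.choose a * a ^ 2 / v + (a + 1) * k.choose (a + 1) * (v / n)) := by
  have hlower := le_knownTail hkn hv₀ hv hak hav
  have hupper := knownTail_le (hv₀.trans_le hv) hkn hv (by omega : a ≤ k)
  have herr : 0 ≤ ((v : ℝ) / n) ^ a *
    (k.choose a * a ^ 2 / v + (a + 1) * k.choose (a + 1) * (v / n)) := by positivity
  rw [abs_le]
  constructor
  · calc _ = k.choose a * ((1 - (a : ℝ) ^ 2 / v) * ((v : ℝ) / n) ^ a) -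
          (a + 1) * (k.choose (a + 1) * ((v : ℝ) / n) ^ (a + 1)) -
            k.choose a * ((v : ℝ) / n) ^ a := by ring
      _ ≤ _ := by linarith
  · linarith

end FactorialMoments

section Comparison

/-- The expectation of `f` of the number of unknown variables of a constraint that has `j` of them
when `v` variables are known, after `t` further variables are revealed one at a time, each uniformly
at random. -/
def revealIter (n : ℕ) : ℕ → ℕ → (ℕ → ℝ) → ℕ → ℝ
  | _, 0, f => f
  | v, t + 1, f => revealStep ((n : ℝ) - v) (revealIter n (v + 1) t f)

variable {k r n : ℕ}

lemma nbhdMean_revealIter {v t : ℕ} (h : v + t ≤ n) (f : ℕ → ℝ) :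
    nbhdMean n k v (revealIter n v t f) = nbhdMean n k (v + t) f := by
  induction t generalizing v with
  | zero => rfl
  | succ t ih =>
    rw [revealIter, nbhdMean_revealStep (by omega), ih (by omega)]
    congr 1
    omega

lemma revealStep_eq_one {N : ℝ} {f : ℕ → ℝ} {j : ℕ} (hj : f j = 1) (hj' : f (j - 1) = 1) :
    revealStep N f j = 1 := by
  rw [revealStep, hj, hj']
  ring

lemma revealIter_of_le {K j : ℕ} (hj : j ≤ K) (v t : ℕ) :
    revealIter n v t (fun i => if i ≤ K then 1 else 0) j = 1 := by
  induction t generalizing v j with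
  | zero => exact if_pos hj
  | succ t ih => exact revealStep_eq_one (ih hj _) (ih (by omega) _)

lemma revealStep_nonneg {N : ℝ} {q : ℕ → ℝ} {j : ℕ} (hN : 0 ≤ N) (hjN : (j : ℝ) ≤ N)
    (hj : 0 ≤ q j) (hj' : 0 ≤ q (j - 1)) : 0 ≤ revealStep N q j :=
  add_nonneg (mul_nonneg (sub_nonneg.2 (div_le_one_of_le₀ hjN hN)) hj)
    (mul_nonneg (by positivity) hj')

lemma abs_revealStep_sub_le_mul {N c ε : ℝ} {f q : ℕ → ℝ} {j : ℕ} (hN : 0 ≤ N) (hjN : (j : ℝ) ≤ N)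
    (hj : |f j - 1 - c * q j| ≤ ε * q j)
    (hj' : |f (j - 1) - 1 - c * q (j - 1)| ≤ ε * q (j - 1)) :
    |revealStep N f j - 1 - c * revealStep N q j| ≤ ε * revealStep N q j := by
  set p : ℝ := j / N
  have hp : 0 ≤ p := by positivity
  have hp' : 0 ≤ 1 - p := sub_nonneg.2 (div_le_one_of_le₀ hjN hN)
  calc |revealStep N f j - 1 - c * revealStep N q j|
      = |(1 - p) * (f j - 1 - c * q j) + p * (f (j - 1) - 1 - c * q (j - 1))| := by
        congr 1
        simp only [revealStep]
        ring
    _ ≤ (1 - p) * |f j - 1 - c * q j| + p * |f (j - 1) - 1 - c * q (j - 1)| := by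
        refine (abs_add_le _ _).trans_eq ?_
        rw [abs_mul, abs_mul, abs_of_nonneg hp, abs_of_nonneg hp']
    _ ≤ (1 - p) * (ε * q j) + p * (ε * q (j - 1)) := by gcongr
    _ = ε * revealStep N q j := by
        rw [revealStep]
        ring

lemma edgeWeight_sub_exp (lam : ℝ) (v t : ℕ) :
    edgeWeight k r n lam v t - Real.exp lam =
      -((Real.exp lam - 1) * (t / ((n : ℝ) - v - k + r))) := by
  rw [edgeWeight]
  ring

lemma edgeWeight_mem_Icc {v t : ℕ} (lam : ℝ) (h : v + t + k ≤ n) :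
    edgeWeight k r n lam v t ∈ Set.Icc 0 (Real.exp lam + 1) := by
  have h' : (v : ℝ) + t + k ≤ n := by exact_mod_cast h
  set p : ℝ := t / ((n : ℝ) - v - k + r)
  have hM : (t : ℝ) ≤ (n : ℝ) - v - k + r := by linarith [r.cast_nonneg (α := ℝ)]
  have hp₀ : 0 ≤ p := div_nonneg t.cast_nonneg (t.cast_nonneg.trans hM)
  have hp₁ : p ≤ 1 := div_le_one_of_le₀ hM (t.cast_nonneg.trans hM)
  have hx : edgeWeight k r n lam v t = p * 1 + (1 - p) * Real.exp lam := by
    rw [edgeWeight]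
    ring
  have hexp := Real.exp_pos lam
  rw [hx]
  constructor <;> nlinarith

/-- A bound, linear in `t / (n - v)`, for the error of the terminal value `exp (lam * K)` as an
approximation of `x ^ K`, where `x` is the edge weight after `t` steps and `K = k - r + 1`. -/
def edgeError (k r n : ℕ) (lam : ℝ) (v t : ℕ) : ℝ :=
  |Real.exp lam - 1| * (t / ((n : ℝ) - v - k + r)) * ((k - r + 1 : ℕ) : ℝ) *
    (Real.exp lam + 1) ^ (k - r)

lemma abs_edgeWeight_pow_sub_le {v t : ℕ} (lam : ℝ) (h : v + t + k ≤ n) :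
    |edgeWeight k r n lam v t ^ (k - r + 1) - Real.exp lam ^ (k - r + 1)| ≤
      edgeError k r n lam v t := by
  obtain ⟨hx₀, hx₁⟩ := edgeWeight_mem_Icc (r := r) lam h
  have h' : (v : ℝ) + t + k ≤ n := by exact_mod_cast h
  have hM : 0 ≤ (n : ℝ) - v - k + r := by
    linarith [r.cast_nonneg (α := ℝ), t.cast_nonneg (α := ℝ)]
  have hmax : max |edgeWeight k r n lam v t| |Real.exp lam| ≤ Real.exp lam + 1 := by
    rw [abs_of_nonneg hx₀, Real.abs_exp]
    exact max_le hx₁ (by linarith)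
  refine (abs_pow_sub_pow_le _ _ _).trans ?_
  rw [edgeWeight_sub_exp, abs_neg, abs_mul, abs_of_nonneg (by positivity : 0 ≤ (t : ℝ) / _),
    Nat.add_sub_cancel, edgeError]
  gcongr

lemma edgeError_succ_le {v t : ℕ} (lam : ℝ) (h : v + t + 1 + k ≤ n) :
    edgeError k r n lam (v + 1) t ≤ edgeError k r n lam v (t + 1) := by
  have h' : (v : ℝ) + t + 1 + k ≤ n := by exact_mod_cast h
  have hratio : (t : ℝ) / ((n : ℝ) - (v + 1 : ℕ) - k + r) ≤
      ((t + 1 : ℕ) : ℝ) / ((n : ℝ) - v - k + r) := by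
    have hM : (t : ℝ) ≤ (n : ℝ) - (v + 1 : ℕ) - k + r := by
      push_cast
      linarith [r.cast_nonneg (α := ℝ)]
    push_cast at hM ⊢
    rcases t.cast_nonneg.eq_or_lt (α := ℝ) with ht₀ | ht₀
    · rw [← ht₀, zero_div]
      exact div_nonneg (by linarith) (by linarith)
    · rw [div_le_div_iff₀ (by linarith) (by linarith)]
      linarith
  rw [edgeError, edgeError]
  gcongr

/-- The probability that a constraint with `j` unknown variables when `v` variables are known has
at most `K` unknown variables once `t` further variables have been revealed. -/
def releaseProb (n K v t : ℕ) : ℕ → ℝ := revealIter n v t fun i => if i ≤ K then 1 else 0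

lemma releaseProb_nonneg {K v t j : ℕ} (h : v + t + k ≤ n) (hjk : j ≤ k) :
    0 ≤ releaseProb n K v t j := by
  induction t generalizing v j with
  | zero =>
    rw [releaseProb, revealIter]
    positivity
  | succ t ih =>
    have hN : (j : ℝ) + v ≤ n := by exact_mod_cast (by omega : j + v ≤ n)
    exact revealStep_nonneg (by linarith [j.cast_nonneg (α := ℝ)]) (by linarith)
      (ih (by omega) hjk) (ih (by omega) (by omega))

/-- A constraint that is ever released carries the weight `x ^ K` of `K = k - r + 1` edges from then
on, and `x ^ K` is `exp lam ^ K` up to an error that only grows with the number of backward steps;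
a constraint that is never released has weight `1`. -/
lemma abs_constraintWeight_sub_le_mul {v t j : ℕ} (lam : ℝ) (h : v + t + k ≤ n)
    (hKj : k - r + 1 ≤ j) (hjk : j ≤ k) :
    |constraintWeight k r n lam v t j - 1 -
        (Real.exp lam ^ (k - r + 1) - 1) * releaseProb n (k - r + 1) v t j| ≤
      edgeError k r n lam v t * releaseProb n (k - r + 1) v t j := by
  have hrelease : ∀ v t, releaseProb n (k - r + 1) v t (k - r + 1) = 1 :=
    revealIter_of_le le_rfl
  have hK : ∀ {v t}, v + t + k ≤ n → |constraintWeight k r n lam v t (k - r + 1) - 1 -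
      (Real.exp lam ^ (k - r + 1) - 1) * releaseProb n (k - r + 1) v t (k - r + 1)| ≤
        edgeError k r n lam v t * releaseProb n (k - r + 1) v t (k - r + 1) := fun {v t} h => by
    rw [hrelease, constraintWeight_of_le lam v t le_rfl, mul_one, mul_one, sub_sub_sub_cancel_right]
    exact abs_edgeWeight_pow_sub_le lam h
  induction t generalizing v j with
  | zero =>
    rcases hKj.eq_or_lt with rfl | hKj
    · exact hK h
    · simp [constraintWeight, releaseProb, revealIter, hKj.not_ge]
  | succ t ih =>
    rcases hKj.eq_or_lt with rfl | hKj
    · exact hK h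
    have hN : (j : ℝ) + v ≤ n := by exact_mod_cast (by omega : j + v ≤ n)
    have hprev : ∀ i, k - r + 1 ≤ i → i ≤ k → |constraintWeight k r n lam (v + 1) t i - 1 -
        (Real.exp lam ^ (k - r + 1) - 1) * releaseProb n (k - r + 1) (v + 1) t i| ≤
          edgeError k r n lam v (t + 1) * releaseProb n (k - r + 1) (v + 1) t i :=
      fun i hKi hik => (ih (by omega) hKi hik).trans
        (mul_le_mul_of_nonneg_right (edgeError_succ_le lam (by omega))
          (releaseProb_nonneg (by omega) hik))
    rw [constraintWeight, if_neg hKj.not_ge]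
    exact abs_revealStep_sub_le_mul (by linarith [j.cast_nonneg (α := ℝ)]) (by linarith)
      (hprev j hKj.le hjk) (hprev (j - 1) (by omega) (by omega))

lemma nbhdMean_releaseProb {v t : ℕ} (hr : 0 < r) (hrk : r ≤ k) (h : v + t ≤ n) :
    nbhdMean n k v (releaseProb n (k - r + 1) v t) = knownTail n k (v + t) (r - 1) := by
  rw [releaseProb, nbhdMean_revealIter h]
  refine nbhdMean_congr _ fun j hj => ?_
  congr 1
  exact propext (by omega)

/-- The weight `x ^ j` of a constraint that starts with `j < K = k - r + 1` unknown variables is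
only bounded, as such constraints are rare. -/
lemma abs_constraintWeight_sub_le {v t j : ℕ} (lam : ℝ) (hrk : r ≤ k)
    (h : v + t + k ≤ n) (hjk : j ≤ k) :
    |constraintWeight k r n lam v t j - 1 -
        (Real.exp lam ^ (k - r + 1) - 1) * releaseProb n (k - r + 1) v t j| ≤
      edgeError k r n lam v t * releaseProb n (k - r + 1) v t j +
        (Real.exp lam + 1) ^ (k - r + 1) * (if r ≤ k - j then 1 else 0) := by
  have hexp := Real.exp_pos lam
  obtain ⟨hx₀, hx₁⟩ := edgeWeight_mem_Icc (r := r) lam h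
  rcases le_or_gt (k - r + 1) j with hKj | hjK
  · rw [if_neg (by omega), mul_zero, add_zero]
    exact abs_constraintWeight_sub_le_mul lam h hKj hjk
  · have hweight : edgeWeight k r n lam v t ^ j ≤ (Real.exp lam + 1) ^ (k - r + 1) :=
      (pow_le_pow_left₀ hx₀ hx₁ j).trans (pow_le_pow_right₀ (by linarith) hjK.le)
    have hterminal : Real.exp lam ^ (k - r + 1) ≤ (Real.exp lam + 1) ^ (k - r + 1) := by
      gcongr
      linarith
    rw [if_pos (by omega), constraintWeight_of_le lam v t hjK.le, releaseProb,
      revealIter_of_le hjK.le, mul_one, mul_one, mul_one, sub_sub_sub_cancel_right]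
    exact (abs_sub_le_of_nonneg_of_le (by positivity) hweight (by positivity) hterminal).trans
      (le_add_of_nonneg_left ((abs_nonneg _).trans (abs_edgeWeight_pow_sub_le lam h)))

lemma abs_nbhdMean_constraintWeight_sub_le {v t : ℕ} (lam : ℝ) (hr : 0 < r) (hrk : r ≤ k)
    (h : v + t + k ≤ n) :
    |nbhdMean n k v (constraintWeight k r n lam v t) - 1 -
        (Real.exp lam ^ (k - r + 1) - 1) * knownTail n k (v + t) (r - 1)| ≤
      edgeError k r n lam v t * knownTail n k (v + t) (r - 1) +
        (Real.exp lam + 1) ^ (k - r + 1) * knownTail n k v r := by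
  have hsub : nbhdMean n k v (constraintWeight k r n lam v t) - 1 -
      (Real.exp lam ^ (k - r + 1) - 1) * knownTail n k (v + t) (r - 1) =
        nbhdMean n k v (fun j => constraintWeight k r n lam v t j - 1 -
          (Real.exp lam ^ (k - r + 1) - 1) * releaseProb n (k - r + 1) v t j) := by
    simp only [sub_eq_add_neg, ← neg_mul]
    rw [nbhdMean_add, nbhdMean_add, nbhdMean_const (by omega), nbhdMean_const_mul,
      nbhdMean_releaseProb hr hrk (by omega)]
  rw [hsub, ← nbhdMean_releaseProb hr hrk (by omega), knownTail, ← nbhdMean_const_mul,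
    ← nbhdMean_const_mul, ← nbhdMean_add]
  exact abs_nbhdMean_le v fun j hj => abs_constraintWeight_sub_le lam hrk h hj

end Comparison

section Asymptotics

lemma log_one_add_sub_isBigO :
    (fun x : ℝ => Real.log (1 + x) - x) =O[nhds 0] fun x => x ^ 2 := by
  refine IsBigO.of_bound 2 ?_
  filter_upwards [Metric.ball_mem_nhds (0 : ℝ) (by norm_num : (0 : ℝ) < 1 / 2)] with x hx
  have hx' : |x| < 1 / 2 := by simpa using hx
  have h := Real.abs_log_sub_add_sum_range_le (x := -x) (by rw [abs_neg]; linarith) 1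
  simp only [sum_range_one, zero_add, pow_one, Nat.cast_zero, div_one, abs_neg, sub_neg_eq_add,
    one_add_one_eq_two] at h
  rw [Real.norm_eq_abs, Real.norm_eq_abs, abs_pow, sub_eq_neg_add]
  refine h.trans ((div_le_iff₀ (by linarith)).2 ?_)
  nlinarith [mul_nonneg (sq_nonneg |x|) (by linarith : 0 ≤ 1 - 2 * |x|)]

section General

variable {ι : Type*} {l : Filter ι} {A B ρ : ι → ℝ} {c : ℝ}

lemma isBigO_of_sub_const_mul_isBigO_mul (hA : (fun i => A i - c * B i) =O[l] fun i => B i * ρ i)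
    (hρ : Tendsto ρ l (nhds 0)) : A =O[l] B := by
  have hBρ : (fun i => B i * ρ i) =O[l] B := by
    simpa using (isBigO_refl B l).mul (hρ.isBigO_one ℝ)
  simpa using (hA.trans hBρ).add ((isBigO_refl B l).const_mul_left c)

lemma log_one_add_sub_isBigO_mul (hA : (fun i => A i - c * B i) =O[l] fun i => B i * ρ i)
    (hB : B =O[l] ρ) (hρ : Tendsto ρ l (nhds 0)) :
    (fun i => Real.log (1 + A i) - c * B i) =O[l] fun i => B i * ρ i := by
  have hAB : A =O[l] B := isBigO_of_sub_const_mul_isBigO_mul hA hρ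
  have hlog : (fun i => Real.log (1 + A i) - A i) =O[l] fun i => B i * ρ i :=
    (log_one_add_sub_isBigO.comp_tendsto ((hAB.trans hB).trans_tendsto hρ)).trans
      (by simpa [Function.comp_def, sq] using hAB.mul (hAB.trans hB))
  simpa using hlog.add hA

end General

/-- The order `1 / u + u / n` of the relative errors of the first-order asymptotics. -/
def relError (u : ℕ → ℕ) (n : ℕ) : ℝ := 1 / u n + u n / n

section UGood

variable {u : ℕ → ℕ}

lemma inv_isBigO_relError : (fun n => 1 / (u n : ℝ)) =O[atTop] relError u :=
  isBigO_of_le _ fun n => by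
    rw [relError, Real.norm_of_nonneg (by positivity), Real.norm_of_nonneg (by positivity)]
    exact le_add_of_nonneg_right (by positivity)

lemma div_isBigO_relError : (fun n => (u n : ℝ) / n) =O[atTop] relError u :=
  isBigO_of_le _ fun n => by
    rw [relError, Real.norm_of_nonneg (by positivity), Real.norm_of_nonneg (by positivity)]
    exact le_add_of_nonneg_left (by positivity)

lemma mul_relError_isBigO :
    (fun n => u n * relError u n) =O[atTop] fun n => max 1 ((u n : ℝ) ^ 2 / n) := by
  refine IsBigO.of_bound 2 (Eventually.of_forall fun n => ?_)
  rw [relError, Real.norm_of_nonneg (by positivity), Real.norm_of_nonneg (by positivity), mul_add,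
    ← mul_div_assoc, ← mul_div_assoc, ← sq, mul_one]
  linarith [div_self_le_one (u n : ℝ), le_max_left 1 ((u n : ℝ) ^ 2 / n),
    le_max_right 1 ((u n : ℝ) ^ 2 / n)]

lemma one_isBigO_max : (fun _ => (1 : ℝ)) =O[atTop] fun n => max 1 ((u n : ℝ) ^ 2 / n) :=
  isBigO_of_le _ fun n => by
    rw [norm_one, Real.norm_of_nonneg (by positivity)]
    exact le_max_left _ _

lemma add_floor_isBigO {τ : ℝ} (hτ : 0 ≤ τ) :
    (fun n => ((u n + ⌊τ * u n⌋₊ : ℕ) : ℝ)) =O[atTop] fun n => (u n : ℝ) := by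
  refine IsBigO.of_bound (1 + τ) (Eventually.of_forall fun n => ?_)
  rw [Real.norm_of_nonneg (by positivity), Real.norm_of_nonneg (by positivity)]
  push_cast
  linarith [Nat.floor_le (by positivity : 0 ≤ τ * u n)]

variable (hu : UGood u)
include hu

lemma UGood.tendsto_relError : Tendsto (relError u) atTop (nhds 0) := by
  have h := (tendsto_inv_atTop_zero.comp hu.1).add hu.2
  rw [add_zero] at h
  exact h.congr fun n => by simp [relError]

lemma UGood.eventually_le (c : ℕ) : ∀ᶠ n in atTop, c ≤ u n := by
  filter_upwards [hu.1.eventually_ge_atTop (c : ℝ)] with n hn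
  exact_mod_cast hn

lemma UGood.eventually_mul_le (c : ℝ) : ∀ᶠ n in atTop, c * u n ≤ n := by
  have hc : 0 < 1 / (|c| + 1) := by positivity
  filter_upwards [hu.2.eventually_le_const hc, eventually_gt_atTop 0] with n hn hpos
  have hpos' : (0 : ℝ) < n := by exact_mod_cast hpos
  rw [div_le_div_iff₀ hpos' (by positivity)] at hn
  nlinarith [le_abs_self c, (u n).cast_nonneg (α := ℝ)]

lemma UGood.eventually_two_mul_add_floor_add_le {τ : ℝ} (hτ : 0 ≤ τ) (k : ℕ) :
    ∀ᶠ n in atTop, 2 * (u n + ⌊τ * u n⌋₊ + k) ≤ n := by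
  filter_upwards [hu.eventually_le k, hu.eventually_mul_le (2 * (2 + τ))] with n hk hn
  have hfloor : (⌊τ * u n⌋₊ : ℝ) ≤ τ * u n := Nat.floor_le (by positivity)
  have hk' : (k : ℝ) ≤ u n := by exact_mod_cast hk
  have h : (2 : ℝ) * (u n + ⌊τ * u n⌋₊ + k) ≤ n := by linarith
  exact_mod_cast h

lemma UGood.div_pow_isBigO_relError {a : ℕ} (ha : 1 ≤ a) :
    (fun n => ((u n : ℝ) / n) ^ a) =O[atTop] relError u := by
  have h := (isBigO_refl (fun n => (u n : ℝ) / n) atTop).mul ((hu.2.isBigO_one ℝ).pow (a - 1))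
  simp only [← pow_succ', Nat.sub_add_cancel ha, one_pow, mul_one] at h
  exact h.trans div_isBigO_relError

lemma UGood.edgeError_isBigO (k r : ℕ) (lam : ℝ) {τ : ℝ} (hτ : 0 ≤ τ) :
    (fun n => edgeError k r n lam (u n) ⌊τ * u n⌋₊) =O[atTop] relError u := by
  have hratio : (fun n => (⌊τ * u n⌋₊ : ℝ) / ((n : ℝ) - u n - k + r)) =O[atTop]
      fun n => (u n : ℝ) / n := by
    refine IsBigO.of_bound (2 * τ) ?_
    filter_upwards [hu.eventually_two_mul_add_floor_add_le hτ k, eventually_gt_atTop 0]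
      with n hn hpos
    have hn' : 2 * ((u n : ℝ) + ⌊τ * u n⌋₊ + k) ≤ n := by exact_mod_cast hn
    have hpos' : (0 : ℝ) < n := by exact_mod_cast hpos
    have hfloor : (⌊τ * u n⌋₊ : ℝ) ≤ τ * u n := Nat.floor_le (by positivity)
    have hhalf : (n : ℝ) / 2 ≤ (n : ℝ) - u n - k + r := by
      linarith [r.cast_nonneg (α := ℝ), (⌊τ * u n⌋₊).cast_nonneg (α := ℝ)]
    rw [Real.norm_of_nonneg (div_nonneg (by positivity) (by linarith)),
      Real.norm_of_nonneg (by positivity)]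
    calc _ ≤ τ * u n / (n / 2) := by gcongr
      _ = _ := by ring
  refine ((hratio.trans div_isBigO_relError).const_mul_left
    (|Real.exp lam - 1| * ((k - r + 1 : ℕ) : ℝ) * (Real.exp lam + 1) ^ (k - r))).congr_left
      fun n => ?_
  rw [edgeError]
  ring

lemma UGood.add_floor_div_sub_isBigO {τ : ℝ} (hτ : 0 ≤ τ) :
    (fun n => ((u n + ⌊τ * u n⌋₊ : ℕ) : ℝ) / u n - (1 + τ)) =O[atTop] fun n => 1 / (u n : ℝ) := by
  refine IsBigO.of_bound 1 ?_
  filter_upwards [hu.eventually_le 1] with n hn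
  have hpos : (0 : ℝ) < u n := by exact_mod_cast hn
  have hle : (⌊τ * u n⌋₊ : ℝ) ≤ τ * u n := Nat.floor_le (by positivity)
  have hlt : τ * u n < ⌊τ * u n⌋₊ + 1 := Nat.lt_floor_add_one _
  have hdiv : ((u n + ⌊τ * u n⌋₊ : ℕ) : ℝ) / u n - (1 + τ) = (⌊τ * u n⌋₊ - τ * u n) / u n := by
    push_cast
    field_simp
    ring
  rw [hdiv, norm_div, norm_div, norm_one, one_mul, Real.norm_of_nonneg hpos.le]
  gcongr
  rw [Real.norm_eq_abs, abs_le]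
  constructor <;> linarith

lemma UGood.add_floor_div_pow_sub_isBigO {τ : ℝ} (hτ : 0 ≤ τ) (a : ℕ) :
    (fun n => (((u n + ⌊τ * u n⌋₊ : ℕ) : ℝ) / n) ^ a - (1 + τ) ^ a * ((u n : ℝ) / n) ^ a) =O[atTop]
      fun n => ((u n : ℝ) / n) ^ a * relError u n := by
  have hdiv := hu.add_floor_div_sub_isBigO hτ
  have hlim : Tendsto (fun n => ((u n + ⌊τ * u n⌋₊ : ℕ) : ℝ) / u n) atTop (nhds (1 + τ)) :=
    tendsto_sub_nhds_zero_iff.1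
      ((hdiv.trans inv_isBigO_relError).trans_tendsto hu.tendsto_relError)
  have hpow := ((hasDerivAt_pow a (1 + τ)).isBigO_sub.comp_tendsto hlim).trans
    (hdiv.trans inv_isBigO_relError)
  refine ((isBigO_refl (fun n => ((u n : ℝ) / n) ^ a) atTop).mul hpow).congr' ?_ EventuallyEq.rfl
  filter_upwards [hu.eventually_le 1] with n hn
  have hpos : (u n : ℝ) ≠ 0 := by positivity
  rw [Function.comp_apply, mul_sub, ← mul_pow, div_mul_div_cancel₀' hpos, mul_comm (_ ^ a)]

lemma UGood.knownTail_sub_isBigO {k a : ℕ} (hak : a + 1 ≤ k) {τ : ℝ} (hτ : 0 ≤ τ) :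
    (fun n => knownTail n k (u n + ⌊τ * u n⌋₊) a -
        k.choose a * (1 + τ) ^ a * ((u n : ℝ) / n) ^ a) =O[atTop]
      fun n => ((u n : ℝ) / n) ^ a * relError u n := by
  set v : ℕ → ℕ := fun n => u n + ⌊τ * u n⌋₊ with hv
  have hvn : (fun n => (v n : ℝ) / n) =O[atTop] fun n => (u n : ℝ) / n := by
    simpa only [div_eq_mul_inv] using
      (add_floor_isBigO hτ).mul (isBigO_refl (fun n : ℕ => (n : ℝ)⁻¹) atTop)
  have hinv : (fun n => k.choose a * (a : ℝ) ^ 2 / v n) =O[atTop] relError u := by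
    have hvu : (fun n => (v n : ℝ)⁻¹) =O[atTop] fun n => 1 / (u n : ℝ) := by
      refine IsBigO.of_bound 1 ?_
      filter_upwards [hu.eventually_le 1] with n hn
      have hun : (u n : ℝ) ≤ v n := by exact_mod_cast Nat.le_add_right _ _
      rw [one_mul, one_div, norm_inv, norm_inv, Real.norm_natCast, Real.norm_natCast]
      exact inv_anti₀ (by exact_mod_cast hn) hun
    exact (hvu.trans inv_isBigO_relError).const_mul_left _
  have hrel : (fun n => k.choose a * (a : ℝ) ^ 2 / v n +
      (a + 1) * k.choose (a + 1) * ((v n : ℝ) / n)) =O[atTop] relError u :=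
    hinv.add ((hvn.trans div_isBigO_relError).const_mul_left _)
  have htail : (fun n => knownTail n k (v n) a - k.choose a * ((v n : ℝ) / n) ^ a) =O[atTop]
      fun n => ((v n : ℝ) / n) ^ a * (k.choose a * (a : ℝ) ^ 2 / v n +
        (a + 1) * k.choose (a + 1) * ((v n : ℝ) / n)) := by
    refine IsBigO.of_bound 1 ?_
    filter_upwards [hu.eventually_two_mul_add_floor_add_le hτ k, hu.eventually_le (a + 1)]
      with n hn hu'
    have hun : u n ≤ v n := Nat.le_add_right _ _
    have hvn' : v n ≤ n := by simp only [hv]; omega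
    rw [one_mul]
    exact (abs_knownTail_sub_le (by omega) (by omega) (by omega) hak (by omega)).trans
      (le_abs_self _)
  have hmain := htail.trans ((hvn.pow a).mul hrel)
  have hfloor := (hu.add_floor_div_pow_sub_isBigO hτ a).const_mul_left (k.choose a : ℝ)
  exact (hmain.add hfloor).congr_left fun n => by ring

lemma UGood.knownTail_isBigO {k a : ℕ} (hak : a ≤ k) :
    (fun n => knownTail n k (u n) a) =O[atTop] fun n => ((u n : ℝ) / n) ^ a := by
  refine IsBigO.of_bound (k.choose a : ℝ) ?_
  filter_upwards [hu.eventually_two_mul_add_floor_add_le le_rfl k, hu.eventually_le 1] with n hn hn'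
  rw [Real.norm_of_nonneg (knownTail_nonneg ..), Real.norm_of_nonneg (by positivity)]
  exact knownTail_le (by omega) (by omega) (by omega) hak

lemma UGood.mul_div_pow_sub_isBigO_one {r : ℕ} (hr : 2 ≤ r) {μ : ℝ} (hμ : 0 ≤ μ) {m : ℕ → ℕ}
    (hm : ∀ n, m n = ⌈μ * (n : ℝ) ^ (r - 1) / (u n : ℝ) ^ (r - 2)⌉₊) :
    (fun n => m n * ((u n : ℝ) / n) ^ (r - 1) - μ * u n) =O[atTop] fun _ => (1 : ℝ) := by
  refine IsBigO.of_bound 1 ?_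
  filter_upwards [hu.eventually_mul_le 1, hu.eventually_le 1, eventually_gt_atTop 0]
    with n hun hpos hn
  have hn' : (0 : ℝ) < n := by exact_mod_cast hn
  have hu₀ : (u n : ℝ) ≠ 0 := Nat.cast_ne_zero.2 (by omega)
  set x : ℝ := μ * (n : ℝ) ^ (r - 1) / (u n : ℝ) ^ (r - 2) with hx
  have hx₀ : 0 ≤ x := by positivity
  have hmul : x * ((u n : ℝ) / n) ^ (r - 1) = μ * u n := by
    obtain ⟨s, rfl⟩ := Nat.exists_eq_add_of_le' hr
    rw [hx, show s + 2 - 1 = s + 1 from rfl, Nat.add_sub_cancel, div_pow]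
    field_simp [hu₀]
    ring
  have hle : ((u n : ℝ) / n) ^ (r - 1) ≤ 1 :=
    pow_le_one₀ (by positivity) ((div_le_one hn').2 (by simpa using hun))
  rw [hm, ← hmul, ← sub_mul, norm_mul, Real.norm_of_nonneg (sub_nonneg.2 (Nat.le_ceil x)),
    Real.norm_of_nonneg (by positivity), norm_one]
  exact mul_le_mul (by linarith [Nat.ceil_lt_add_one hx₀]) hle (by positivity) zero_le_one

end UGood

/-- The coefficient `c` for which the mean weight of a single constraint is asymptotically
`1 + c (u / n) ^ (r - 1)`. -/
def growthCoeff (k r : ℕ) (lam τ : ℝ) : ℝ :=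
  (Real.exp lam ^ (k - r + 1) - 1) * (k.choose (r - 1) * (1 + τ) ^ (r - 1))

lemma phiE_eq_mul_growthCoeff_sub {k r : ℕ} (hrk : r ≤ k) (μ lam τ : ℝ) :
    phiE k r μ lam τ = μ * growthCoeff k r lam τ - lam * τ := by
  rw [phiE, growthCoeff, ← Real.exp_nat_mul, Nat.cast_succ, Nat.cast_sub hrk]
  ring

/-- The mean weight of a single constraint after `⌊τ u⌋` backward steps. -/
def meanWeight (k r : ℕ) (u : ℕ → ℕ) (lam τ : ℝ) (n : ℕ) : ℝ :=
  nbhdMean n k (u n) (constraintWeight k r n lam (u n) ⌊τ * u n⌋₊)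

section MeanWeight

variable {k r : ℕ} {u : ℕ → ℕ} (hu : UGood u) (hr : 2 ≤ r) (hrk : r ≤ k) (lam : ℝ) {τ : ℝ}
  (hτ : 0 ≤ τ)
include hu hr hrk hτ

lemma UGood.meanWeight_sub_isBigO :
    (fun n => meanWeight k r u lam τ n - 1 -
        growthCoeff k r lam τ * ((u n : ℝ) / n) ^ (r - 1)) =O[atTop]
      fun n => ((u n : ℝ) / n) ^ (r - 1) * relError u n := by
  set B : ℕ → ℝ := fun n => ((u n : ℝ) / n) ^ (r - 1) with hB
  set Q : ℕ → ℝ := fun n => knownTail n k (u n + ⌊τ * u n⌋₊) (r - 1)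
  have htail : (fun n => Q n - k.choose (r - 1) * (1 + τ) ^ (r - 1) * B n) =O[atTop]
      fun n => B n * relError u n := hu.knownTail_sub_isBigO (by omega) hτ
  have hQB : Q =O[atTop] B := isBigO_of_sub_const_mul_isBigO_mul htail hu.tendsto_relError
  have hrare : (fun n => knownTail n k (u n) r) =O[atTop] fun n => B n * relError u n :=
    (hu.knownTail_isBigO hrk).trans <| by
      simpa [hB, ← pow_succ, Nat.sub_add_cancel (one_le_two.trans hr)] using
        (isBigO_refl B atTop).mul (div_isBigO_relError (u := u))
  have herror : (fun n => Q n * edgeError k r n lam (u n) ⌊τ * u n⌋₊) =O[atTop]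
      fun n => B n * relError u n := hQB.mul (hu.edgeError_isBigO k r lam hτ)
  have hcompare : (fun n => meanWeight k r u lam τ n - 1 -
      (Real.exp lam ^ (k - r + 1) - 1) * Q n) =O[atTop] fun n => B n * relError u n := by
    refine IsBigO.trans (IsBigO.of_bound 1 ?_)
      (herror.add (hrare.const_mul_left ((Real.exp lam + 1) ^ (k - r + 1))))
    filter_upwards [hu.eventually_two_mul_add_floor_add_le hτ k] with n hn
    rw [one_mul, mul_comm (Q n)]
    exact (abs_nbhdMean_constraintWeight_sub_le lam (by omega) hrk (by omega)).trans
      (le_abs_self _)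
  refine (hcompare.add (htail.const_mul_left (Real.exp lam ^ (k - r + 1) - 1))).congr_left
    fun n => ?_
  rw [growthCoeff]
  ring

lemma UGood.log_meanWeight_sub_isBigO :
    (fun n => Real.log (meanWeight k r u lam τ n) -
        growthCoeff k r lam τ * ((u n : ℝ) / n) ^ (r - 1)) =O[atTop]
      fun n => ((u n : ℝ) / n) ^ (r - 1) * relError u n := by
  simpa using log_one_add_sub_isBigO_mul (hu.meanWeight_sub_isBigO hr hrk lam hτ)
    (hu.div_pow_isBigO_relError (by omega)) hu.tendsto_relError

lemma UGood.eventually_meanWeight_pos : ∀ᶠ n in atTop, 0 < meanWeight k r u lam τ n := by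
  have hsub : (fun n => meanWeight k r u lam τ n - 1) =O[atTop] relError u :=
    (isBigO_of_sub_const_mul_isBigO_mul (hu.meanWeight_sub_isBigO hr hrk lam hτ)
      hu.tendsto_relError).trans (hu.div_pow_isBigO_relError (by omega))
  exact (tendsto_sub_nhds_zero_iff.1 (hsub.trans_tendsto hu.tendsto_relError)).eventually_const_lt
    one_pos

lemma UGood.eventually_lowerE_exp_pos (m : ℕ → ℕ) :
    ∀ᶠ n in atTop,
      0 < lowerE k r n (u n) (m n) ⌊τ * u n⌋₊ fun st => Real.exp (lam * (st.1 : ℝ)) := by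
  filter_upwards [hu.eventually_two_mul_add_floor_add_le hτ k,
    hu.eventually_meanWeight_pos hr hrk lam hτ] with n hn hpos
  rw [lowerE_exp (by omega) hrk (by omega), ← meanWeight]
  positivity

variable {μ : ℝ} (hμ : 0 ≤ μ) {m : ℕ → ℕ}
  (hm : ∀ n, m n = ⌈μ * (n : ℝ) ^ (r - 1) / (u n : ℝ) ^ (r - 2)⌉₊)
include hμ hm

lemma UGood.mul_log_meanWeight_sub_isBigO :
    (fun n => m n * Real.log (meanWeight k r u lam τ n) - μ * growthCoeff k r lam τ * u n)
      =O[atTop] fun n => max 1 ((u n : ℝ) ^ 2 / n) := by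
  have hmB := hu.mul_div_pow_sub_isBigO_one hr hμ hm
  have hone : (fun _ => (1 : ℝ)) =O[atTop] fun n => (u n : ℝ) :=
    (isBigO_const_left_iff_pos_le_norm one_ne_zero).2 ⟨1, one_pos, by
      filter_upwards [hu.eventually_le 1] with n hn
      rw [Real.norm_natCast]
      exact_mod_cast hn⟩
  have hmBu : (fun n => m n * ((u n : ℝ) / n) ^ (r - 1)) =O[atTop] fun n => (u n : ℝ) := by
    simpa using (hmB.trans hone).add ((isBigO_refl (fun n => (u n : ℝ)) atTop).const_mul_left μ)
  have hlog : (fun n => m n * (Real.log (meanWeight k r u lam τ n) -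
      growthCoeff k r lam τ * ((u n : ℝ) / n) ^ (r - 1))) =O[atTop]
        fun n => max 1 ((u n : ℝ) ^ 2 / n) := by
    refine IsBigO.trans ?_ ((hmBu.mul (isBigO_refl (relError u) atTop)).trans mul_relError_isBigO)
    simpa only [mul_assoc] using (isBigO_refl (fun n => (m n : ℝ)) atTop).mul
      (hu.log_meanWeight_sub_isBigO hr hrk lam hτ)
  refine (hlog.add ((hmB.trans one_isBigO_max).const_mul_left
    (growthCoeff k r lam τ))).congr_left fun n => ?_
  ring

lemma UGood.log_lowerE_exp_sub_isBigO :
    (fun n => Real.log (lowerE k r n (u n) (m n) ⌊τ * u n⌋₊ fun st => Real.exp (lam * (st.1 : ℝ))) -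
      phiE k r μ lam τ * u n) =O[atTop] fun n => max 1 ((u n : ℝ) ^ 2 / n) := by
  have hfloor : (fun n => lam * (τ * u n - ⌊τ * u n⌋₊)) =O[atTop] fun _ => (1 : ℝ) := by
    refine IsBigO.of_bound |lam| (Eventually.of_forall fun n => ?_)
    rw [norm_mul, Real.norm_eq_abs lam, norm_one]
    gcongr
    rw [Real.norm_eq_abs, abs_le]
    constructor <;> linarith [Nat.floor_le (by positivity : 0 ≤ τ * u n),
      Nat.lt_floor_add_one (τ * u n)]
  refine ((hfloor.trans one_isBigO_max).add
    (hu.mul_log_meanWeight_sub_isBigO hr hrk lam hτ hμ hm)).congr' ?_ EventuallyEq.rfl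
  filter_upwards [hu.eventually_two_mul_add_floor_add_le hτ k,
    hu.eventually_meanWeight_pos hr hrk lam hτ] with n hn hpos
  rw [lowerE_exp (by omega) hrk (by omega), ← meanWeight, Real.log_mul (Real.exp_ne_zero _)
    (pow_pos hpos _).ne', Real.log_exp, Real.log_pow, phiE_eq_mul_growthCoeff_sub hrk]
  ring

end MeanWeight

end Asymptotics

theorem stmt14_general (k r : ℕ) (hr : 2 ≤ r) (hrk : r ≤ k)
    (u : ℕ → ℕ) (hu : UGood u)
    (μ : ℝ) (hμ : 0 ≤ μ)
    (m : ℕ → ℕ) (hm : ∀ n, m n = ⌈μ * (n : ℝ) ^ (r - 1) / (u n : ℝ) ^ (r - 2)⌉₊)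
    (τ lam : ℝ) (hτ : 0 ≤ τ) :
    ∃ C > (0 : ℝ), ∀ᶠ n in atTop,
      0 < lowerE k r n (u n) (m n) ⌊τ * (u n : ℝ)⌋₊
            (fun st : ℤ × (ℕ → ℕ) => Real.exp (lam * (st.1 : ℝ))) ∧
      |Real.log (lowerE k r n (u n) (m n) ⌊τ * (u n : ℝ)⌋₊
            (fun st : ℤ × (ℕ → ℕ) => Real.exp (lam * (st.1 : ℝ))))
          - phiE k r μ lam τ * u n|
        ≤ C * max 1 ((u n : ℝ) ^ 2 / n) := by
  obtain ⟨C, hC, hbound⟩ := (hu.log_lowerE_exp_sub_isBigO hr hrk lam hτ hμ hm).exists_pos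
  refine ⟨C, hC, ?_⟩
  filter_upwards [hu.eventually_lowerE_exp_pos hr hrk lam hτ m, hbound.bound] with n hpos hn
  rw [Real.norm_of_nonneg (r := max _ _) (by positivity)] at hn
  exact ⟨hpos, hn⟩

/-- Theorem `thm:LG`: for the lower-bound Markov chain with
`m = ⌈μ n^{r-1}/u(n)^{r-2}⌉`, for any constants `τ > 0` and `λ`,
`E[exp(λ E̲(⌊τ u(n)⌋))] = exp(φ_{k,r}(μ,λ,τ) u(n) + O(max{1, u(n)²/n}))`. -/
theorem stmt14 (k r : ℕ) (hr : 3 ≤ r) (hrk : r ≤ k)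
    (u : ℕ → ℕ) (hu : UGood u)
    (μ : ℝ) (hμ0 : 0 < μ)
    (m : ℕ → ℕ) (hm : ∀ n, m n = ⌈μ * (n : ℝ) ^ (r - 1) / (u n : ℝ) ^ (r - 2)⌉₊)
    (τ lam : ℝ) (hτ : 0 < τ) :
    ∃ C > (0 : ℝ), ∀ᶠ n in atTop,
      0 < lowerE k r n (u n) (m n) ⌊τ * (u n : ℝ)⌋₊
            (fun st : ℤ × (ℕ → ℕ) => Real.exp (lam * (st.1 : ℝ))) ∧
      |Real.log (lowerE k r n (u n) (m n) ⌊τ * (u n : ℝ)⌋₊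
            (fun st : ℤ × (ℕ → ℕ) => Real.exp (lam * (st.1 : ℝ))))
          - phiE k r μ lam τ * u n|
        ≤ C * max 1 ((u n : ℝ) ^ 2 / n) :=
  stmt14_general k r (by omega) hrk u hu μ hμ0.le m hm τ lam hτ.le
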